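/- Identifying ξ = (s̄, s̲, p̄, p̲) with a vector in ℝ^{2N_G+2E}, the set Ω_ξ satisfies: the closure of the interior of Ω_ξ equals the closure of Ω_ξ (closure and interior taken in ℝ^{2N_G+2E}). -/

import Mathlib

open Matrix

noncomputable section

/-- Parameter tuple ξ = (s̄, s̲, p̄, p̲). -/
abbrev XiT (NG E : ℕ) : Type := (Fin NG → ℝ) × (Fin NG → ℝ) × (Fin E → ℝ) × (Fin E → ℝ)

/-- Each column of `C` has exactly one `+1`, one `-1`, and zeros elsewhere. -/
def IsIncidence {NG NL E : ℕ} (C : Matrix (Fin (NG + NL)) (Fin E) ℝ) : Prop :=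
  ∀ e : Fin E, ∃ u v : Fin (NG + NL), u ≠ v ∧ C u e = 1 ∧ C v e = -1 ∧
    ∀ w : Fin (NG + NL), w ≠ u → w ≠ v → C w e = 0

/-- Connectedness: the kernel of `Cᵀ` consists exactly of the constant vectors. -/
def ConnectedIncidence {NG NL E : ℕ} (C : Matrix (Fin (NG + NL)) (Fin E) ℝ) : Prop :=
  ∀ x : Fin (NG + NL) → ℝ, Cᵀ *ᵥ x = 0 ↔ ∃ c : ℝ, x = fun _ => c

/-- `B` is diagonal with strictly positive diagonal entries. -/
def PosDiag {E : ℕ} (B : Matrix (Fin E) (Fin E) ℝ) : Prop :=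
  (∀ e, 0 < B e e) ∧ ∀ e e' : Fin E, e ≠ e' → B e e' = 0

/-- Feasibility of `(s^g, θ)` for the DC-OPF with limits `ξ` and loads `sl`. -/
def Feasible {NG NL E : ℕ} (C : Matrix (Fin (NG + NL)) (Fin E) ℝ)
    (B : Matrix (Fin E) (Fin E) ℝ) (ξ : XiT NG E) (sl : Fin NL → ℝ)
    (sg : Fin NG → ℝ) (θ : Fin (NG + NL) → ℝ) : Prop :=
  (∀ h : 0 < NG + NL, θ ⟨0, h⟩ = 0) ∧
  (C * B * Cᵀ) *ᵥ θ = Fin.append sg (fun j => -(sl j)) ∧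
  (∀ i, ξ.2.1 i ≤ sg i ∧ sg i ≤ ξ.1 i) ∧
  (∀ e, ξ.2.2.2 e ≤ ((B * Cᵀ) *ᵥ θ) e ∧ ((B * Cᵀ) *ᵥ θ) e ≤ ξ.2.2.1 e)

/-- The set Ω_ξ of admissible system limits. -/
def OmegaXi {NG NL E : ℕ} (C : Matrix (Fin (NG + NL)) (Fin E) ℝ)
    (B : Matrix (Fin E) (Fin E) ℝ) : Set (XiT NG E) :=
  { ξ | (∀ i, 0 ≤ ξ.2.1 i) ∧ (∀ i, ξ.2.1 i < ξ.1 i) ∧ (∀ e, ξ.2.2.2 e < ξ.2.2.1 e) ∧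
    ∃ sl : Fin NL → ℝ, (∀ j, 0 < sl j) ∧ ∃ sg θ, Feasible C B ξ sl sg θ }

/-- The set Ω_sl(ξ) of strictly positive feasible load profiles. -/
def OmegaSl {NG NL E : ℕ} (C : Matrix (Fin (NG + NL)) (Fin E) ℝ)
    (B : Matrix (Fin E) (Fin E) ℝ) (ξ : XiT NG E) : Set (Fin NL → ℝ) :=
  { sl | (∀ j, 0 < sl j) ∧ ∃ sg θ, Feasible C B ξ sl sg θ }

/-- `(sg, θ)` is an optimal solution of the DC-OPF. -/
def IsOptimal {NG NL E : ℕ} (C : Matrix (Fin (NG + NL)) (Fin E) ℝ)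
    (B : Matrix (Fin E) (Fin E) ℝ) (f : Fin NG → ℝ) (ξ : XiT NG E)
    (sl : Fin NL → ℝ) (sg : Fin NG → ℝ) (θ : Fin (NG + NL) → ℝ) : Prop :=
  Feasible C B ξ sl sg θ ∧
  ∀ sg' θ', Feasible C B ξ sl sg' θ' → f ⬝ᵥ sg ≤ f ⬝ᵥ sg'

/-- The matrix M: first N rows are C B Cᵀ, last row is e₁ᵀ. -/
def Mmat {NG NL E : ℕ} (C : Matrix (Fin (NG + NL)) (Fin E) ℝ)
    (B : Matrix (Fin E) (Fin E) ℝ) : Matrix (Fin (NG + NL + 1)) (Fin (NG + NL)) ℝ :=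
  Matrix.of fun i j => if h : (i : ℕ) < NG + NL then (C * B * Cᵀ) ⟨(i : ℕ), h⟩ j
    else if (j : ℕ) = 0 then 1 else 0

/-- KKT point for the DC-OPF. -/
def IsKKT {NG NL E : ℕ} (C : Matrix (Fin (NG + NL)) (Fin E) ℝ)
    (B : Matrix (Fin E) (Fin E) ℝ) (f : Fin NG → ℝ) (ξ : XiT NG E)
    (sl : Fin NL → ℝ) (sg : Fin NG → ℝ) (θ : Fin (NG + NL) → ℝ)
    (τ : Fin (NG + NL + 1) → ℝ) (μp μm : Fin E → ℝ) (lp lm : Fin NG → ℝ) : Prop :=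
  Feasible C B ξ sl sg θ ∧
  (Mmat C B)ᵀ *ᵥ τ + (C * B) *ᵥ (μp - μm) = 0 ∧
  (∀ i : Fin NG, -f i = -τ (Fin.castLE (by omega) i) + lp i - lm i) ∧
  (∀ e, 0 ≤ μp e) ∧ (∀ e, 0 ≤ μm e) ∧ (∀ i, 0 ≤ lp i) ∧ (∀ i, 0 ≤ lm i) ∧
  μp ⬝ᵥ (((B * Cᵀ) *ᵥ θ) - ξ.2.2.1) = 0 ∧
  μm ⬝ᵥ (ξ.2.2.2 - ((B * Cᵀ) *ᵥ θ)) = 0 ∧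
  lp ⬝ᵥ (sg - ξ.1) = 0 ∧
  lm ⬝ᵥ (ξ.2.1 - sg) = 0

/-- ℓ₀ "norm": number of nonzero entries. -/
def nnz {n : ℕ} (v : Fin n → ℝ) : ℕ := Set.ncard { i | v i ≠ 0 }

/-- The set Ω_f of well-behaved cost vectors. -/
def OmegaF {NG NL E : ℕ} (C : Matrix (Fin (NG + NL)) (Fin E) ℝ)
    (B : Matrix (Fin E) (Fin E) ℝ) : Set (Fin NG → ℝ) :=
  { f | (∀ i, 0 ≤ f i) ∧
    ∀ ξ ∈ OmegaXi C B, ∀ sl ∈ OmegaSl C B ξ,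
      (∃! p : (Fin NG → ℝ) × (Fin (NG + NL) → ℝ), IsOptimal C B f ξ sl p.1 p.2) ∧
      ∀ sg θ τ μp μm lp lm, IsKKT C B f ξ sl sg θ τ μp μm lp lm →
        NG - 1 ≤ nnz μp + nnz μm + nnz lp + nnz lm }

/-- Number of binding inequality constraints at `(sg, θ)` (among the 2N_G + 2E). -/
def bindingCount {NG NL E : ℕ} (C : Matrix (Fin (NG + NL)) (Fin E) ℝ)
    (B : Matrix (Fin E) (Fin E) ℝ) (ξ : XiT NG E) (sg : Fin NG → ℝ)
    (θ : Fin (NG + NL) → ℝ) : ℕ :=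
  Set.ncard { i : Fin NG | sg i = ξ.1 i } + Set.ncard { i : Fin NG | sg i = ξ.2.1 i } +
  Set.ncard { e : Fin E | ((B * Cᵀ) *ᵥ θ) e = ξ.2.2.1 e } +
  Set.ncard { e : Fin E | ((B * Cᵀ) *ᵥ θ) e = ξ.2.2.2 e }

/-- ~Ω_sl(ξ, f): loads with exactly N_G − 1 binding constraints at the optimum. -/
def TOmegaSl {NG NL E : ℕ} (C : Matrix (Fin (NG + NL)) (Fin E) ℝ)
    (B : Matrix (Fin E) (Fin E) ℝ) (f : Fin NG → ℝ) (ξ : XiT NG E) :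
    Set (Fin NL → ℝ) :=
  { sl | sl ∈ OmegaSl C B ξ ∧
    ∀ sg θ, IsOptimal C B f ξ sl sg θ → bindingCount C B ξ sg θ = NG - 1 }

/-- Indices of binding inequality constraints:
`inl i` = upper generation, `inr (inl i)` = lower generation,
`inr (inr (inl e))` = upper flow, `inr (inr (inr e))` = lower flow. -/
def BindingIdx {NG NL E : ℕ} (C : Matrix (Fin (NG + NL)) (Fin E) ℝ)
    (B : Matrix (Fin E) (Fin E) ℝ) (ξ : XiT NG E) (sg : Fin NG → ℝ)
    (θ : Fin (NG + NL) → ℝ) : Set (Fin NG ⊕ Fin NG ⊕ Fin E ⊕ Fin E) :=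
  { c | match c with
    | Sum.inl i => sg i = ξ.1 i
    | Sum.inr (Sum.inl i) => sg i = ξ.2.1 i
    | Sum.inr (Sum.inr (Sum.inl e)) => ((B * Cᵀ) *ᵥ θ) e = ξ.2.2.1 e
    | Sum.inr (Sum.inr (Sum.inr e)) => ((B * Cᵀ) *ᵥ θ) e = ξ.2.2.2 e }

/-- Gradients of the N + 1 equality constraints, as vectors in ℝ^{N_G} × ℝ^{N}. -/
def eqGrad {NG NL E : ℕ} (C : Matrix (Fin (NG + NL)) (Fin E) ℝ)
    (B : Matrix (Fin E) (Fin E) ℝ) :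
    (Unit ⊕ Fin (NG + NL)) → (Fin NG → ℝ) × (Fin (NG + NL) → ℝ)
  | Sum.inl _ => (0, fun j => if (j : ℕ) = 0 then 1 else 0)
  | Sum.inr i => ((fun k : Fin NG => if (k : ℕ) = (i : ℕ) then -1 else 0),
      fun j => (C * B * Cᵀ) i j)

/-- Gradients of the inequality constraints. -/
def ineqGrad {NG NL E : ℕ} (C : Matrix (Fin (NG + NL)) (Fin E) ℝ)
    (B : Matrix (Fin E) (Fin E) ℝ) :
    (Fin NG ⊕ Fin NG ⊕ Fin E ⊕ Fin E) → (Fin NG → ℝ) × (Fin (NG + NL) → ℝ)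
  | Sum.inl i => (Pi.single i 1, 0)
  | Sum.inr (Sum.inl i) => (-Pi.single i 1, 0)
  | Sum.inr (Sum.inr (Sum.inl e)) => (0, fun j => (B * Cᵀ) e j)
  | Sum.inr (Sum.inr (Sum.inr e)) => (0, fun j => -(B * Cᵀ) e j)

/-- The family of gradients of all equality constraints together with the binding
inequality constraints at `(sg, θ)`. -/
def fullGrad {NG NL E : ℕ} (C : Matrix (Fin (NG + NL)) (Fin E) ℝ)
    (B : Matrix (Fin E) (Fin E) ℝ) (ξ : XiT NG E) (sg : Fin NG → ℝ)
    (θ : Fin (NG + NL) → ℝ) :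
    ((Unit ⊕ Fin (NG + NL)) ⊕ ↥(BindingIdx C B ξ sg θ)) →
      (Fin NG → ℝ) × (Fin (NG + NL) → ℝ) :=
  fun i => match i with
    | Sum.inl j => eqGrad C B j
    | Sum.inr c => ineqGrad C B c.1

/-- S_G ⊥ S_B : the equality-constraint gradients together with the gradients
`(e_i, 0)`, `i ∈ S_G`, and `(0, row e of B Cᵀ)`, `e ∈ S_B`, are linearly independent. -/
def Perp {NG NL E : ℕ} (C : Matrix (Fin (NG + NL)) (Fin E) ℝ)
    (B : Matrix (Fin E) (Fin E) ℝ) (SG : Finset (Fin NG)) (SB : Finset (Fin E)) : Prop :=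
  LinearIndependent ℝ (fun i : (Unit ⊕ Fin (NG + NL)) ⊕ (↥SG ⊕ ↥SB) =>
    match i with
    | Sum.inl j => eqGrad C B j
    | Sum.inr (Sum.inl g) => ((Pi.single (g : Fin NG) 1 : Fin NG → ℝ), (0 : Fin (NG + NL) → ℝ))
    | Sum.inr (Sum.inr e) => ((0 : Fin NG → ℝ), fun j => (B * Cᵀ) (e : Fin E) j))

/-- The OPF operator: the generation part of the (unique) optimal solution. -/
def OPFmap {NG NL E : ℕ} (C : Matrix (Fin (NG + NL)) (Fin E) ℝ)
    (B : Matrix (Fin E) (Fin E) ℝ) (f : Fin NG → ℝ) (ξ : XiT NG E)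
    (sl : Fin NL → ℝ) : Fin NG → ℝ := by
  classical
  exact if h : ∃ p : (Fin NG → ℝ) × (Fin (NG + NL) → ℝ), IsOptimal C B f ξ sl p.1 p.2
    then h.choose.1 else 0

/-- The matrix R(S_G, S_B)ᵀ: rows N_G+1,…,N of C B Cᵀ; the rows of C B Cᵀ indexed
by S_G; the rows of B Cᵀ indexed by S_B; and e₁ᵀ. -/
def Rmat {NG NL E : ℕ} (C : Matrix (Fin (NG + NL)) (Fin E) ℝ)
    (B : Matrix (Fin E) (Fin E) ℝ) (SG : Finset (Fin NG)) (SB : Finset (Fin E)) :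
    Matrix ((Fin NL ⊕ (↥SG ⊕ ↥SB)) ⊕ Unit) (Fin (NG + NL)) ℝ :=
  Matrix.of fun i j => match i with
    | Sum.inl (Sum.inl k) => (C * B * Cᵀ) (Fin.natAdd NG k) j
    | Sum.inl (Sum.inr (Sum.inl g)) => (C * B * Cᵀ) (Fin.castAdd NL (g : Fin NG)) j
    | Sum.inl (Sum.inr (Sum.inr e)) => (B * Cᵀ) (e : Fin E) j
    | Sum.inr _ => if (j : ℕ) = 0 then 1 else 0

/-- The matrix Π applied to a load vector: embeds ℝ^{N_L} in the row-index space. -/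
def padSl {NG NL E : ℕ} (SG : Finset (Fin NG)) (SB : Finset (Fin E))
    (v : Fin NL → ℝ) : (Fin NL ⊕ (↥SG ⊕ ↥SB)) ⊕ Unit → ℝ
  | Sum.inl (Sum.inl k) => v k
  | _ => 0

/-- J(S_G, S_B) as a map: v ↦ −G (R(S_G,S_B)ᵀ)⁻¹ Π v, where G consists of the
first N_G rows of C B Cᵀ. -/
def JFun {NG NL E : ℕ} (C : Matrix (Fin (NG + NL)) (Fin E) ℝ)
    (B : Matrix (Fin E) (Fin E) ℝ) (SG : Finset (Fin NG)) (SB : Finset (Fin E))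
    (v : Fin NL → ℝ) : Fin NG → ℝ :=
  fun i =>
    -(((C * B * Cᵀ) *ᵥ (Function.invFun (Rmat C B SG SB).mulVec (padSl SG SB v)))
      (Fin.castAdd NL i))

/-- J(S_G, S_B) as an N_G × N_L matrix. -/
def Jmatrix {NG NL E : ℕ} (C : Matrix (Fin (NG + NL)) (Fin E) ℝ)
    (B : Matrix (Fin E) (Fin E) ℝ) (SG : Finset (Fin NG)) (SB : Finset (Fin E)) :
    Matrix (Fin NG) (Fin NL) ℝ :=
  Matrix.of fun i j => JFun C B SG SB (Pi.single j 1) i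

/-! The set Ω_ξ is convex, being a projection of a convex set, so it suffices to find an interior
point. Any `ξ` whose limits are met strictly by some flow solution is one, because strict
inequalities survive small changes of `ξ`. Such a solution exists: let every generator produce `NL`
and every load consume `NG`. These injections sum to zero, hence are orthogonal to the constants,
which are the left kernel of `C * B * Cᵀ`, and so lie in its range. -/

section Laplacian

variable {m n : Type*} [Fintype m] [Fintype n]

theorem exists_mulVec_eq_iff_forall_vecMul_eq_zero {K : Type*} [Field K] {A : Matrix m n K}
    {d : m → K} : (∃ x, A *ᵥ x = d) ↔ ∀ y, y ᵥ* A = 0 → y ⬝ᵥ d = 0 := by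
  classical
  refine ⟨?_, fun hd => ?_⟩
  · rintro ⟨x, rfl⟩ y hy
    rw [dotProduct_mulVec, hy, zero_dotProduct]
  · suffices d ∈ LinearMap.range A.mulVecLin from this
    by_contra hmem
    obtain ⟨f, hfd, hf⟩ := Submodule.exists_le_ker_of_notMem hmem
    obtain ⟨y, rfl⟩ := (dotProductEquiv K m).surjective f
    refine hfd (hd y (dotProduct_eq_zero _ fun x => ?_))
    rw [← dotProduct_mulVec]
    exact hf ⟨x, rfl⟩

variable {C : Matrix m n ℝ} {B : Matrix n n ℝ}

theorem vecMul_mul_mul_transpose_eq_zero_iff (hB : B.PosDef) {y : m → ℝ} :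
    y ᵥ* (C * B * Cᵀ) = 0 ↔ y ᵥ* C = 0 := by
  refine ⟨fun hy => ?_, fun hy => by simp [← vecMul_vecMul, hy]⟩
  by_contra hne
  refine (hB.dotProduct_mulVec_pos hne).ne' ?_
  calc star (y ᵥ* C) ⬝ᵥ B *ᵥ (y ᵥ* C)
      = y ᵥ* (C * B * Cᵀ) ⬝ᵥ y := by
        simp [← vecMul_vecMul, ← dotProduct_mulVec, mulVec_transpose]
    _ = 0 := by rw [hy, zero_dotProduct]

theorem exists_mul_mul_transpose_mulVec_eq (hB : B.PosDef)
    (hC : ∀ x : m → ℝ, Cᵀ *ᵥ x = 0 → ∃ c : ℝ, x = fun _ => c) {d : m → ℝ} (hd : ∑ i, d i = 0) :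
    ∃ θ, (C * B * Cᵀ) *ᵥ θ = d := by
  refine exists_mulVec_eq_iff_forall_vecMul_eq_zero.2 fun y hy => ?_
  rw [vecMul_mul_mul_transpose_eq_zero_iff hB, ← mulVec_transpose] at hy
  obtain ⟨c, rfl⟩ := hC y hy
  simp [dotProduct, ← Finset.mul_sum, hd]

theorem exists_grounded_mul_mul_transpose_mulVec_eq (hB : B.PosDef)
    (hC : ∀ x : m → ℝ, Cᵀ *ᵥ x = 0 ↔ ∃ c : ℝ, x = fun _ => c) {d : m → ℝ} (hd : ∑ i, d i = 0)
    (i₀ : m) : ∃ θ, θ i₀ = 0 ∧ (C * B * Cᵀ) *ᵥ θ = d := by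
  obtain ⟨θ, hθ⟩ := exists_mul_mul_transpose_mulVec_eq hB (fun x => (hC x).1) hd
  have hconst : Cᵀ *ᵥ (fun _ => θ i₀) = 0 := (hC _).2 ⟨_, rfl⟩
  refine ⟨θ - fun _ => θ i₀, sub_self _, ?_⟩
  rw [mulVec_sub, hθ, ← mulVec_mulVec, hconst, mulVec_zero, sub_zero]

end Laplacian

theorem PosDiag.posDef {E : ℕ} {B : Matrix (Fin E) (Fin E) ℝ} (hB : PosDiag B) : B.PosDef := by
  have hdiag : B.IsDiag := fun _ _ => hB.2 _ _
  rw [← hdiag.diagonal_diag]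
  exact posDef_diagonal_iff.2 hB.1

section StrictLimits

variable {NG E : ℕ}

/-- The system limits that the generation `g` and the line flow `f` meet with strict inequality,
with positive lower generation limits. -/
def strictLimits (g : Fin NG → ℝ) (f : Fin E → ℝ) : Set (XiT NG E) :=
  Set.univ.pi (fun i => Set.Ioi (g i)) ×ˢ Set.univ.pi (fun i => Set.Ioo 0 (g i)) ×ˢ
    Set.univ.pi (fun e => Set.Ioi (f e)) ×ˢ Set.univ.pi (fun e => Set.Iio (f e))

theorem isOpen_strictLimits (g : Fin NG → ℝ) (f : Fin E → ℝ) : IsOpen (strictLimits g f) :=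
  (isOpen_set_pi Set.finite_univ fun _ _ => isOpen_Ioi).prod <|
    (isOpen_set_pi Set.finite_univ fun _ _ => isOpen_Ioo).prod <|
      (isOpen_set_pi Set.finite_univ fun _ _ => isOpen_Ioi).prod <|
        isOpen_set_pi Set.finite_univ fun _ _ => isOpen_Iio

theorem strictLimits_nonempty {g : Fin NG → ℝ} (hg : ∀ i, 0 < g i) (f : Fin E → ℝ) :
    (strictLimits g f).Nonempty :=
  (Set.univ_pi_nonempty_iff.2 fun _ => Set.nonempty_Ioi).prod <|
    (Set.univ_pi_nonempty_iff.2 fun i => Set.nonempty_Ioo.2 (hg i)).prod <|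
      (Set.univ_pi_nonempty_iff.2 fun _ => Set.nonempty_Ioi).prod <|
        Set.univ_pi_nonempty_iff.2 fun _ => Set.nonempty_Iio

end StrictLimits

section OmegaXi

variable {NG NL E : ℕ} {C : Matrix (Fin (NG + NL)) (Fin E) ℝ} {B : Matrix (Fin E) (Fin E) ℝ}

theorem strictLimits_subset_omegaXi {sl : Fin NL → ℝ} {sg : Fin NG → ℝ}
    {θ : Fin (NG + NL) → ℝ} (hsl : ∀ j, 0 < sl j) (hθ : ∀ h : 0 < NG + NL, θ ⟨0, h⟩ = 0)
    (hflow : (C * B * Cᵀ) *ᵥ θ = Fin.append sg fun j => -sl j) :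
    strictLimits sg ((B * Cᵀ) *ᵥ θ) ⊆ OmegaXi C B := by
  rintro ξ ⟨hs_hi, hs_lo, hp_hi, hp_lo⟩
  simp only [Set.mem_univ_pi, Set.mem_Ioi, Set.mem_Ioo, Set.mem_Iio] at hs_hi hs_lo hp_hi hp_lo
  exact ⟨fun i => (hs_lo i).1.le, fun i => (hs_lo i).2.trans (hs_hi i),
    fun e => (hp_lo e).trans (hp_hi e), sl, hsl, sg, θ, hθ, hflow,
    fun i => ⟨(hs_lo i).2.le, (hs_hi i).le⟩, fun e => ⟨(hp_lo e).le, (hp_hi e).le⟩⟩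

theorem interior_omegaXi_nonempty (hNG : 0 < NG) (hNL : 0 < NL) (hConn : ConnectedIncidence C)
    (hB : B.PosDef) : (interior (OmegaXi C B)).Nonempty := by
  let sg : Fin NG → ℝ := fun _ => NL
  let sl : Fin NL → ℝ := fun _ => NG
  have hbalance : ∑ i, Fin.append sg (fun j => -sl j) i = 0 := by
    simp [sg, sl, Fin.sum_univ_add, mul_comm]
  obtain ⟨θ, hθ, hflow⟩ := exists_grounded_mul_mul_transpose_mulVec_eq hB hConn hbalance
    ⟨0, by lia⟩
  have hsub : strictLimits sg ((B * Cᵀ) *ᵥ θ) ⊆ OmegaXi C B :=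
    strictLimits_subset_omegaXi (fun _ => Nat.cast_pos.2 hNG) (fun _ => hθ) hflow
  exact (strictLimits_nonempty (fun _ => Nat.cast_pos.2 hNL) _).mono <|
    interior_maximal hsub (isOpen_strictLimits _ _)

theorem Feasible.convex_combination {ξ ξ' : XiT NG E} {sl sl' : Fin NL → ℝ}
    {sg sg' : Fin NG → ℝ} {θ θ' : Fin (NG + NL) → ℝ} (h : Feasible C B ξ sl sg θ)
    (h' : Feasible C B ξ' sl' sg' θ') {a b : ℝ} (ha : 0 ≤ a) (hb : 0 ≤ b) :
    Feasible C B (a • ξ + b • ξ') (a • sl + b • sl') (a • sg + b • sg') (a • θ + b • θ') := by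
  obtain ⟨hθ, hflow, hs, hp⟩ := h
  obtain ⟨hθ', hflow', hs', hp'⟩ := h'
  have hcombo {x x' y y' : ℝ} (hxy : x ≤ y) (hxy' : x' ≤ y') :
      a * x + b * x' ≤ a * y + b * y' := by gcongr
  refine ⟨fun hN => by simp [hθ hN, hθ' hN], ?_,
    fun i => ⟨hcombo (hs i).1 (hs' i).1, hcombo (hs i).2 (hs' i).2⟩, fun e => ?_⟩
  · rw [mulVec_add, mulVec_smul, mulVec_smul, hflow, hflow']
    ext i
    refine Fin.addCases (fun i => ?_) (fun j => ?_) i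
    · simp
    · simp [add_comm]
  · rw [mulVec_add, mulVec_smul, mulVec_smul]
    exact ⟨hcombo (hp e).1 (hp' e).1, hcombo (hp e).2 (hp' e).2⟩

variable (C B) in
theorem convex_omegaXi : Convex ℝ (OmegaXi C B) := by
  refine convex_iff_forall_pos.2 ?_
  rintro ξ ⟨h0, hs, hp, sl, hsl, sg, θ, hfeas⟩ ξ' ⟨h0', hs', hp', sl', hsl', sg', θ', hfeas'⟩
    a b ha hb -
  refine ⟨fun i => ?_, fun i => ?_, fun e => ?_, a • sl + b • sl', fun j => ?_, _, _,
    hfeas.convex_combination hfeas' ha.le hb.le⟩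
  · exact add_nonneg (mul_nonneg ha.le (h0 i)) (mul_nonneg hb.le (h0' i))
  · exact add_lt_add (mul_lt_mul_of_pos_left (hs i) ha) (mul_lt_mul_of_pos_left (hs' i) hb)
  · exact add_lt_add (mul_lt_mul_of_pos_left (hp e) ha) (mul_lt_mul_of_pos_left (hp' e) hb)
  · exact add_pos (mul_pos ha (hsl j)) (mul_pos hb (hsl' j))

theorem omegaXi_closure_interior_general (hNG : 0 < NG) (hNL : 0 < NL)
    (hConn : ConnectedIncidence C) (hB : B.PosDef) :
    closure (interior (OmegaXi C B)) = closure (OmegaXi C B) :=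
  (convex_omegaXi C B).closure_interior_eq_closure_of_nonempty_interior
    (interior_omegaXi_nonempty hNG hNL hConn hB)

end OmegaXi

theorem omegaXi_closure_interior {NG NL E : ℕ} (hNG : 0 < NG) (hNL : 0 < NL) (hE : 0 < E)
    (C : Matrix (Fin (NG + NL)) (Fin E) ℝ) (B : Matrix (Fin E) (Fin E) ℝ)
    (hInc : IsIncidence C) (hConn : ConnectedIncidence C) (hB : PosDiag B) :
    closure (interior (OmegaXi C B)) = closure (OmegaXi C B) :=
  omegaXi_closure_interior_general hNG hNL hConn hB.posDef

end
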